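/- Let R be a U-WLL DCTRS over a signature F, t a reachable term in T(F̄,V), w a linear term in T(F,V), w' = ext(w), and θ a substitution over F̄. If t →*_{SR(R)} w'θ, then there exists a substitution σ such that t = w'σ and xσ →*_{SR(R)} xθ for all variables x ∈ Var(w). -/

import Mathlib

set_option autoImplicit false

/-- First-order terms over a signature `F` and variables `V`. -/
inductive Term (F : Type) (V : Type) : Type where
  | var : V → Term F V
  | app : F → List (Term F V) → Term F V

namespace Term

variable {F V G W : Type}

/-- Application of a substitution. -/
def subst (σ : V → Term F W) : Term F V → Term F W
  | .var x => σ x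
  | .app f ts => .app f (ts.attach.map (fun ⟨t, _⟩ => subst σ t))

/-- Renaming of variables. -/
def rename (g : V → W) (t : Term F V) : Term F W := t.subst (fun x => .var (g x))

/-- Mapping of function symbols. -/
def mapF (g : F → G) : Term F V → Term G V
  | .var x => .var x
  | .app f ts => .app (g f) (ts.attach.map (fun ⟨t, _⟩ => mapF g t))

/-- Number of occurrences of the variable `x` in a term. -/
def count [DecidableEq V] (x : V) : Term F V → ℕ
  | .var y => if y = x then 1 else 0
  | .app _ ts => (ts.attach.map (fun ⟨t, _⟩ => count x t)).sum

/-- The list of variables occurring in a term (with repetitions). -/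
def varList : Term F V → List V
  | .var x => [x]
  | .app _ ts => ts.attach.flatMap (fun ⟨t, _⟩ => varList t)

/-- A term is linear if every variable occurs at most once in it. -/
def Linear [DecidableEq V] (t : Term F V) : Prop := ∀ x : V, t.count x ≤ 1

/-- Well-formedness of a term with respect to an arity assignment. -/
inductive WF (ar : F → ℕ) : Term F V → Prop where
  | var (x : V) : WF ar (.var x)
  | app (f : F) (ts : List (Term F V)) :
      ts.length = ar f → (∀ t ∈ ts, WF ar t) → WF ar (.app f ts)

end Term

/-- Number of occurrences of `x` in a sequence of terms. -/
def seqCount {F V : Type} [DecidableEq V] (x : V) (ts : List (Term F V)) : ℕ :=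
  (ts.map (Term.count x)).sum

/-- An oriented conditional rewrite rule `l → r ⇐ s1 ≈ t1, …, sk ≈ tk`. -/
structure CRule (F V : Type) : Type where
  lhs : Term F V
  rhs : Term F V
  conds : List (Term F V × Term F V)

/-- A conditional term rewriting system: a set of conditional rules. -/
abbrev CTRS (F V : Type) := Set (CRule F V)

namespace CRule

variable {F V W : Type}

/-- The sequence `l, t1, …, tk` of "pattern" terms of a rule. -/
def pats (ρ : CRule F V) : List (Term F V) := ρ.lhs :: ρ.conds.map Prod.snd

/-- The sequence `r, s1, …, sk` of "source" terms of a rule. -/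
def srcs (ρ : CRule F V) : List (Term F V) := ρ.rhs :: ρ.conds.map Prod.fst

/-- Weak left-linearity: `|l,t1,…,tk|_x = 1` for every `x ∈ Var(r,s1,…,sk)`. -/
def WLL [DecidableEq V] (ρ : CRule F V) : Prop :=
  ∀ x : V, 0 < seqCount x ρ.srcs → seqCount x ρ.pats = 1

/-- Determinism: `Var(si) ⊆ Var(l, t1, …, t_{i−1})`. -/
def Det [DecidableEq V] (ρ : CRule F V) : Prop :=
  ∀ i : ℕ, ∀ h : i < ρ.conds.length, ∀ x : V,
    0 < Term.count x (ρ.conds.get ⟨i, h⟩).1 →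
    0 < seqCount x (ρ.lhs :: (ρ.conds.take i).map Prod.snd)

/-- Type 3: `Var(r) ⊆ Var(l, s1, t1, …, sk, tk)`. -/
def Type3 [DecidableEq V] (ρ : CRule F V) : Prop :=
  ∀ x : V, 0 < Term.count x ρ.rhs →
    0 < seqCount x (ρ.lhs :: ρ.conds.flatMap (fun c => [c.1, c.2]))

/-- The left-hand side is a non-variable term. -/
def LhsNonVar (ρ : CRule F V) : Prop := ∀ x : V, ρ.lhs ≠ .var x

/-- Renaming the variables of a rule. -/
def mapV (g : V → W) (ρ : CRule F V) : CRule F W :=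
  ⟨ρ.lhs.rename g, ρ.rhs.rename g, ρ.conds.map (fun c => (c.1.rename g, c.2.rename g))⟩

end CRule

/-- `R` is a deterministic CTRS (of Type 3, left-hand sides non-variable). -/
def IsDCTRS {F V : Type} [DecidableEq V] (R : CTRS F V) : Prop :=
  ∀ ρ ∈ R, ρ.Det ∧ ρ.Type3 ∧ ρ.LhsNonVar

/-- All rules of `R` are weakly left-linear. -/
def IsWLL {F V : Type} [DecidableEq V] (R : CTRS F V) : Prop := ∀ ρ ∈ R, ρ.WLL

/-- Closure of a relation under contexts (rewriting below the root). -/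
inductive CtxStep {F V : Type} (root : Term F V → Term F V → Prop) :
    Term F V → Term F V → Prop where
  | root {s t : Term F V} : root s t → CtxStep root s t
  | congr {f : F} {pre post : List (Term F V)} {s t : Term F V} :
      CtxStep root s t →
      CtxStep root (.app f (pre ++ s :: post)) (.app f (pre ++ t :: post))

/-- A root rewrite step using a rule of `R`, conditions evaluated with `prev`. -/
def RootStep {F V : Type} (R : CTRS F V) (prev : Term F V → Term F V → Prop)
    (s t : Term F V) : Prop :=
  ∃ ρ ∈ R, ∃ σ : V → Term F V,
    s = ρ.lhs.subst σ ∧ t = ρ.rhs.subst σ ∧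
    ∀ c ∈ ρ.conds, Relation.ReflTransGen prev (c.1.subst σ) (c.2.subst σ)

/-- The level-stratified reduction relation `→_{(n),R}`. -/
def LevelStep {F V : Type} (R : CTRS F V) : ℕ → Term F V → Term F V → Prop
  | 0 => fun _ _ => False
  | n + 1 => CtxStep (RootStep R (LevelStep R n))

/-- The reduction relation `→_R = ⋃_{n} →_{(n),R}`. -/
def Red {F V : Type} (R : CTRS F V) (s t : Term F V) : Prop :=
  ∃ n : ℕ, LevelStep R n s t

/-- Many-step reduction `→*_R`. -/
def RedStar {F V : Type} (R : CTRS F V) : Term F V → Term F V → Prop :=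
  Relation.ReflTransGen (Red R)

/-- `n`-fold composition of a relation. -/
def NFold {α : Type} (r : α → α → Prop) : ℕ → α → α → Prop
  | 0 => fun a b => a = b
  | n + 1 => fun a c => ∃ b, r a b ∧ NFold r n b c

/-- One-hole contexts. -/
inductive Ctx (F V : Type) : Type where
  | hole : Ctx F V
  | app : F → List (Term F V) → Ctx F V → List (Term F V) → Ctx F V

/-- Filling the hole of a context with a term. -/
def Ctx.fill {F V : Type} : Ctx F V → Term F V → Term F V
  | .hole, t => t
  | .app f pre C post, t => .app f (pre ++ C.fill t :: post)
/-- Signature extended with the fresh symbols `U^ρ_i`. -/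
abbrev UF (F V : Type) := F ⊕ (CRule F V × ℕ)

/-- Embedding of terms over `F` into terms over the extended signature `U_R(F)`. -/
def liftF {F V : Type} (t : Term F V) : Term (UF F V) V := t.mapF Sum.inl

/-- The list `X⃗_i` enumerating `Var(l, t1, …, t_{i−1})` in a fixed order. -/
def Xlist {F V : Type} [DecidableEq V] (ρ : CRule F V) (i : ℕ) : List V :=
  (ρ.lhs.varList ++ ((ρ.conds.take (i - 1)).map Prod.snd).flatMap Term.varList).dedup

/-- A dummy condition (used as a default, never relevant). -/
def dummyCond {F V : Type} (ρ : CRule F V) : Term F V × Term F V := (ρ.lhs, ρ.lhs)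

/-- The term `U^ρ_i(t, X⃗_i)`. -/
def uterm {F V : Type} [DecidableEq V] (ρ : CRule F V) (i : ℕ) (t : Term F V) :
    Term (UF F V) V :=
  .app (Sum.inr (ρ, i)) (liftF t :: (Xlist ρ i).map Term.var)

/-- Left-hand side of the `j`-th unraveled rule of `ρ` (j = 0, …, k). -/
def ulhs {F V : Type} [DecidableEq V] (ρ : CRule F V) (j : ℕ) : Term (UF F V) V :=
  if j = 0 then liftF ρ.lhs
  else uterm ρ j (ρ.conds.getD (j - 1) (dummyCond ρ)).2

/-- Right-hand side of the `j`-th unraveled rule of `ρ` (j = 0, …, k). -/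
def urhs {F V : Type} [DecidableEq V] (ρ : CRule F V) (j : ℕ) : Term (UF F V) V :=
  if j = ρ.conds.length then liftF ρ.rhs
  else uterm ρ (j + 1) (ρ.conds.getD j (dummyCond ρ)).1

/-- The unconditional rules `U(ρ)` obtained by unraveling the rule `ρ`. -/
def URules {F V : Type} [DecidableEq V] (ρ : CRule F V) : Set (CRule (UF F V) V) :=
  { r | ∃ j ≤ ρ.conds.length, r = ⟨ulhs ρ j, urhs ρ j, []⟩ }

/-- The simultaneous unraveling `U(R)` of a DCTRS `R`. -/
def USys {F V : Type} [DecidableEq V] (R : CTRS F V) : CTRS (UF F V) V :=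
  ⋃ ρ ∈ R, URules ρ

/-- `R` is ultra-WLL (`U`-WLL): every rule of `U(R)` is WLL. -/
def IsUWLL {F V : Type} [DecidableEq V] (R : CTRS F V) : Prop :=
  ∀ r ∈ USys R, r.WLL
/-- Variables used for terms over the extended signature `F̄`: original
variables plus a countable supply of fresh variables. -/
abbrev WVar (V : Type) := V ⊕ ℕ

/-- The extended signature `F̄` of the SR transformation: the original symbols
(`c̄` for constructors, `f̄` for defined symbols, with extra arguments appended),
the fresh constant `⊥`, the fresh unary symbol `⟨·⟩`, and the fresh tuple
symbols `[ ]^ρ_j`. -/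
inductive SSym (F V : Type) : Type where
  | orig : F → SSym F V
  | bot : SSym F V
  | guard : SSym F V
  | tup : CRule F V → ℕ → SSym F V

/-- Terms over the extended signature `F̄`. -/
abbrev STerm (F V : Type) := Term (SSym F V) (WVar V)

/-- The fresh constant `⊥`. -/
def botT {F V : Type} : STerm F V := .app .bot []

/-- The fresh unary symbol `⟨·⟩`. -/
def guardT {F V : Type} (t : STerm F V) : STerm F V := .app .guard [t]

/-- `t̄`: the embedding of `t ∈ T(F,V)` into `T(F̄,V)` in which all the extra
arguments of defined symbols are filled with `⊥`.  Here `mOf f` is the number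
of conditional `f`-rules (0 for constructors). -/
def barT {F V : Type} (mOf : F → ℕ) : Term F V → STerm F V
  | .var x => .var (Sum.inl x)
  | .app f ts =>
      .app (.orig f)
        ((ts.attach.map (fun ⟨t, _⟩ => barT mOf t)) ++ List.replicate (mOf f) botT)

mutual
/-- `ext(t)`: the embedding of `t ∈ T(F,V)` into `T(F̄,V)` in which the extra
arguments of defined symbols are filled with distinct fresh variables; a
counter is threaded through to keep the fresh variables distinct. -/
def extT {F V : Type} (mOf : F → ℕ) : Term F V → ℕ → STerm F V × ℕ
  | .var x, c => (.var (Sum.inl x), c)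
  | .app f ts, c =>
      let p := extTList mOf ts c
      (.app (.orig f)
         (p.1 ++ (List.range (mOf f)).map (fun k => .var (Sum.inr (p.2 + k)))),
       p.2 + mOf f)

/-- `ext` on lists of terms, threading the fresh-variable counter. -/
def extTList {F V : Type} (mOf : F → ℕ) : List (Term F V) → ℕ → List (STerm F V) × ℕ
  | [], c => ([], c)
  | t :: ts, c =>
      let p := extT mOf t c
      let q := extTList mOf ts p.2
      (p.1 :: q.1, q.2)
end

/-- The backtranslation `t̂`: the partial mapping erasing `⟨·⟩` and the extra
arguments of defined symbols, recovering a term over `F`. -/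
def hatT {F V : Type} (ar : F → ℕ) : STerm F V → Option (Term F V)
  | .var (Sum.inl x) => some (.var x)
  | .var (Sum.inr _) => none
  | .app (.orig f) ts =>
      Option.map (Term.app f)
        ((ts.take (ar f)).attach.mapM (fun t => hatT ar t.1))
  | .app .guard [t] => hatT ar t
  | .app _ _ => none
decreasing_by
  · have h1 : t.1 ∈ ts := List.mem_of_mem_take t.2
    have := List.sizeOf_lt_of_mem h1
    simp only [Term.app.sizeOf_spec]
    omega
  · simp
    omega

/-- Embedding of `T(F,V)` into the terms over the unraveling signature
`U_R(F)` with extended variables. -/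
def liftUV {F V : Type} (t : Term F V) : Term (UF F V) (WVar V) :=
  (t.mapF Sum.inl).rename Sum.inl
/-- The list `V⃗_j` enumerating `Var(t1, …, t_{j−1})` in a fixed order. -/
def Vlist {F V : Type} [DecidableEq V] (ρ : CRule F V) (j : ℕ) : List V :=
  (((ρ.conds.take (j - 1)).map Prod.snd).flatMap Term.varList).dedup

/-- The term `[⟨inner⟩, V⃗_j]^ρ_j` (used in the rewrite rules of `SR(R)`). -/
def tupT {F V : Type} [DecidableEq V] (ρ : CRule F V) (j : ℕ) (inner : STerm F V) :
    STerm F V :=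
  .app (.tup ρ j) (guardT inner :: (Vlist ρ j).map (fun v => .var (Sum.inl v)))

/-- The `j`-th unconditional rule (j = 0, …, k) obtained by the SR
transformation from the `i`-th conditional `f`-rule
`ρ : f(w1,…,wn) → r ⇐ s1 ≈ t1, …, sk ≈ tk` (where `i = idx ρ`). -/
def condSRRule {F V : Type} [DecidableEq V] (mOf : F → ℕ) (idx : CRule F V → ℕ)
    (ρ : CRule F V) (j : ℕ) : CRule (SSym F V) (WVar V) :=
  match ρ.lhs with
  | .var _ => ⟨barT mOf ρ.lhs, barT mOf ρ.rhs, []⟩  -- irrelevant (lhs is never a variable)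
  | .app f ws =>
    let i := idx ρ
    let m := mOf f
    let p := extTList mOf ws 0
    let ws' := p.1
    let c0 := p.2
    let slot : STerm F V → List (STerm F V) := fun mid =>
      (List.range m).map (fun q => if q = i - 1 then mid else .var (Sum.inr (c0 + q)))
    let k := ρ.conds.length
    ⟨(if j = 0 then
        Term.app (SSym.orig f) (ws' ++ slot botT)
      else
        Term.app (SSym.orig f)
          (ws' ++ slot (tupT ρ j (extT mOf (ρ.conds.getD (j - 1) (dummyCond ρ)).2 (c0 + m)).1))),
     (if j = k then
        guardT (barT mOf ρ.rhs)
      else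
        Term.app (SSym.orig f)
          (ws' ++ slot (tupT ρ (j + 1) (barT mOf (ρ.conds.getD j (dummyCond ρ)).1)))),
     []⟩

/-- The unconditional rule `ext(l) → ⟨r̄⟩` obtained by the SR transformation
from an unconditional rule `l → r`. -/
def uncondSRRule {F V : Type} (mOf : F → ℕ) (ρ : CRule F V) : CRule (SSym F V) (WVar V) :=
  ⟨(extT mOf ρ.lhs 0).1, guardT (barT mOf ρ.rhs), []⟩

/-- The auxiliary rule `⟨⟨x⟩⟩ → ⟨x⟩`. -/
def auxGuard {F V : Type} : CRule (SSym F V) (WVar V) :=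
  ⟨guardT (guardT (.var (Sum.inr 0))), guardT (.var (Sum.inr 0)), []⟩

/-- The auxiliary rule shifting `⟨·⟩` upward over the `i`-th argument of the
symbol `f` (and resetting the extra arguments of defined symbols):
`f̄(x1,…,⟨xi⟩,…,xn, z1,…,zm) → ⟨f̄(x1,…,xn, ⊥,…,⊥)⟩`. -/
def auxShift {F V : Type} (ar mOf : F → ℕ) (f : F) (i : ℕ) : CRule (SSym F V) (WVar V) :=
  ⟨Term.app (SSym.orig f)
     (((List.range (ar f)).map
         (fun q => if q = i then guardT (.var (Sum.inr q)) else .var (Sum.inr q))) ++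
      (List.range (mOf f)).map (fun q => .var (Sum.inr (ar f + q)))),
   guardT (Term.app (SSym.orig f)
     (((List.range (ar f)).map (fun q => Term.var (Sum.inr q))) ++
      List.replicate (mOf f) botT)),
   []⟩

/-- The SR transformation `SR(R)`: the unconditional TRS over `F̄` consisting of
the transformed rules of `R` together with the auxiliary rules `R_aux`. -/
def SRSys {F V : Type} [DecidableEq V] (R : CTRS F V) (ar mOf : F → ℕ)
    (idx : CRule F V → ℕ) : CTRS (SSym F V) (WVar V) :=
  { r | (∃ ρ ∈ R, ρ.conds = [] ∧ r = uncondSRRule mOf ρ) ∨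
        (∃ ρ ∈ R, ρ.conds ≠ [] ∧ ∃ j ≤ ρ.conds.length, r = condSRRule mOf idx ρ j) ∨
        r = auxGuard ∨
        (∃ (f : F) (i : ℕ), i < ar f ∧ r = auxShift ar mOf f i) }

/-- Well-formedness of the data `(ar, mOf, idx)` describing the signature `F`
(with arities `ar`), the number `mOf f` of conditional `f`-rules of `R`, and
the ranking `idx` of the conditional rules of each defined symbol by some
arbitrary but fixed order. -/
def GoodSetup {F V : Type} [DecidableEq V] (R : CTRS F V) (ar mOf : F → ℕ)
    (idx : CRule F V → ℕ) : Prop :=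
  (∀ ρ ∈ R, ρ.lhs.WF ar ∧ ρ.rhs.WF ar ∧ ∀ c ∈ ρ.conds, c.1.WF ar ∧ c.2.WF ar) ∧
  (∀ ρ ∈ R, ∃ (f : F) (ws : List (Term F V)), ρ.lhs = Term.app f ws) ∧
  (∀ ρ ∈ R, ρ.conds ≠ [] →
     ∀ (f : F) (ws : List (Term F V)), ρ.lhs = Term.app f ws →
       1 ≤ idx ρ ∧ idx ρ ≤ mOf f) ∧
  (∀ ρ₁, ρ₁ ∈ R → ∀ ρ₂, ρ₂ ∈ R → ρ₁.conds ≠ [] → ρ₂.conds ≠ [] →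
     ∀ (f : F) (ws₁ ws₂ : List (Term F V)),
       ρ₁.lhs = Term.app f ws₁ → ρ₂.lhs = Term.app f ws₂ →
       idx ρ₁ = idx ρ₂ → ρ₁ = ρ₂) ∧
  (∀ (f : F) (i : ℕ), 1 ≤ i → i ≤ mOf f →
     ∃ ρ ∈ R, ρ.conds ≠ [] ∧ (∃ ws : List (Term F V), ρ.lhs = Term.app f ws) ∧ idx ρ = i)
/-- The unraveled system `U(R)` with its rules considered over the extended
variable set `WVar V` (so that it rewrites the terms in the image of `Φ`). -/
def USysW {F V : Type} [DecidableEq V] (R : CTRS F V) : CTRS (UF F V) (WVar V) :=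
  { r | ∃ r' ∈ USys R, r = r'.mapV Sum.inl }

/-- Membership in the set `Φ(t)`: `PhiMem R ar mOf idx t u` states that
`u ∈ Φ(t)`, where `Φ` is the mapping (defined mutually with the auxiliary
mapping `Ψ`) from reachable terms of `T(F̄,V)` to sets of terms of
`T(U_R(F),V)`:
* `Φ(x) = {x}` for a variable `x`;
* `Φ(⟨t⟩) = Φ(t)`;
* for an original symbol `f` applied to arguments `ts`, `Φ` contains
  `f(t'1,…,t'n)` for all `t'p ∈ Φ(tp)` of the first `ar f` arguments (this is
  the clause for constructors and the clause `Ψ(f̄(t⃗,⊥,…,⊥))` for defined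
  symbols), and
* for each `i`-th extra argument of a defined symbol `f` that is a tuple
  `[⟨t'⟩, t'1,…,t'_{nj}]^ρ_j` (where `ρ` is the `i`-th conditional `f`-rule),
  `Φ` contains all terms `U^ρ_j(u', u⃗')` with `u' ∈ Φ(t')` and
  `u⃗' ∈ Φ(σ(X⃗j))`, where `σ` is a substitution with `σ(V⃗j) = t'1,…,t'_{nj}`
  and `σ(ext(w1),…,ext(wn))` equal to the main arguments of the node. -/
inductive PhiMem {F V : Type} [DecidableEq V] (R : CTRS F V) (ar mOf : F → ℕ)
    (idx : CRule F V → ℕ) : STerm F V → Term (UF F V) (WVar V) → Prop where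
  | var (x : WVar V) : PhiMem R ar mOf idx (.var x) (.var x)
  | guard {t : STerm F V} {u : Term (UF F V) (WVar V)} :
      PhiMem R ar mOf idx t u → PhiMem R ar mOf idx (guardT t) u
  | orig {f : F} {ts : List (STerm F V)} {us : List (Term (UF F V) (WVar V))} :
      us.length = (ts.take (ar f)).length →
      (∀ p ∈ List.zip (ts.take (ar f)) us, PhiMem R ar mOf idx p.1 p.2) →
      PhiMem R ar mOf idx (.app (.orig f) ts) (.app (Sum.inl f) us)
  | cond {f : F} {ts : List (STerm F V)} {ρ : CRule F V} {ws : List (Term F V)}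
      {j : ℕ} {tin : STerm F V} {vargs : List (STerm F V)}
      {σ : WVar V → STerm F V} {u : Term (UF F V) (WVar V)}
      {us : List (Term (UF F V) (WVar V))} :
      ρ ∈ R → ρ.conds ≠ [] → ρ.lhs = .app f ws →
      1 ≤ j → j ≤ ρ.conds.length →
      (ts.drop (ar f))[idx ρ - 1]? = some (.app (.tup ρ j) (guardT tin :: vargs)) →
      (Vlist ρ j).map (fun v => σ (Sum.inl v)) = vargs →
      (extTList mOf ws 0).1.map (Term.subst σ) = ts.take (ar f) →
      PhiMem R ar mOf idx tin u →
      us.length = (Xlist ρ j).length →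
      (∀ p ∈ List.zip (Xlist ρ j) us, PhiMem R ar mOf idx (σ (Sum.inl p.1)) p.2) →
      PhiMem R ar mOf idx (.app (.orig f) ts) (.app (Sum.inr (ρ, j)) (u :: us))

/-- The set `Φ(t)`. -/
def Phi {F V : Type} [DecidableEq V] (R : CTRS F V) (ar mOf : F → ℕ)
    (idx : CRule F V → ℕ) (t : STerm F V) : Set (Term (UF F V) (WVar V)) :=
  { u | PhiMem R ar mOf idx t u }

/-- `σ' ∈ Φ(σ)`, the extension of `Φ` to substitutions:
`Dom(σ') ⊆ Dom(σ)` and `xσ' ∈ Φ(xσ)` for every `x ∈ Dom(σ)`. -/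
def PhiSub {F V : Type} [DecidableEq V] (R : CTRS F V) (ar mOf : F → ℕ)
    (idx : CRule F V → ℕ) (σ : WVar V → STerm F V)
    (σ' : WVar V → Term (UF F V) (WVar V)) : Prop :=
  ∀ x : WVar V, PhiMem R ar mOf idx (σ x) (σ' x)

/-- The relation `s ⇝ t`: for each `t' ∈ Φ(t)` there exists `s' ∈ Φ(s)` with
`s' →*_{U(R)} t'`. -/
def Leadsto {F V : Type} [DecidableEq V] (R : CTRS F V) (ar mOf : F → ℕ)
    (idx : CRule F V → ℕ) (s t : STerm F V) : Prop :=
  ∀ u, PhiMem R ar mOf idx t u →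
    ∃ u', PhiMem R ar mOf idx s u' ∧ RedStar (USysW R) u' u

/-- A term of `T(F̄,V)` is reachable if it is a subterm of some term reachable
by `SR(R)` from `⟨s̄⟩` for some `s ∈ T(F,V)`. -/
def SRReachable {F V : Type} [DecidableEq V] (R : CTRS F V) (ar mOf : F → ℕ)
    (idx : CRule F V → ℕ) (t : STerm F V) : Prop :=
  ∃ (s : Term F V) (C : Ctx (SSym F V) (WVar V)),
    s.WF ar ∧ RedStar (SRSys R ar mOf idx) (guardT (barT mOf s)) (C.fill t)

/-- The restriction `σ|_X` of a substitution to the variables of a term `t`. -/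
def restrictTo {F V : Type} [DecidableEq V] (σ : WVar V → STerm F V) (t : STerm F V) :
    WVar V → STerm F V :=
  fun x => if 0 < t.count x then σ x else .var x


theorem subst_app' {F V W : Type} (σ : V → Term F W) (f : F) (ts : List (Term F V)) :
    (Term.app f ts).subst σ = .app f (ts.map (Term.subst σ)) := by
  simp [Term.subst]

theorem count_app' {F V : Type} [DecidableEq V] (x : V) (f : F) (ts : List (Term F V)) :
    (Term.app f ts).count x = seqCount x ts := by
  simp [Term.count, seqCount]

theorem extTList_length {F V : Type} (mOf : F → ℕ) (ts : List (Term F V)) (c : ℕ) :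
    (extTList mOf ts c).1.length = ts.length := by
  induction ts generalizing c with
  | nil => simp [extTList]
  | cons t ts ih => simp [extTList, ih]

mutual
theorem extT_mono {F V : Type} (mOf : F → ℕ) : ∀ (w : Term F V) (c : ℕ),
    c ≤ (extT mOf w c).2
  | .var x, c => by simp [extT]
  | .app f ts, c => by
      have := extTList_mono mOf ts c
      simp only [extT]; omega
theorem extTList_mono {F V : Type} (mOf : F → ℕ) : ∀ (ws : List (Term F V)) (c : ℕ),
    c ≤ (extTList mOf ws c).2
  | [], c => by simp [extTList]
  | t :: ts, c => by
      have h1 := extT_mono mOf t c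
      have h2 := extTList_mono mOf ts (extT mOf t c).2
      simp only [extTList]; omega
end

mutual
theorem extT_agree {F V : Type} [DecidableEq V] (mOf : F → ℕ) (σ σ' : WVar V → STerm F V) :
    ∀ (w : Term F V) (c : ℕ),
    (∀ x, 0 < w.count x → σ (Sum.inl x) = σ' (Sum.inl x)) →
    (∀ k < (extT mOf w c).2, σ (Sum.inr k) = σ' (Sum.inr k)) →
    (extT mOf w c).1.subst σ = (extT mOf w c).1.subst σ'
  | .var x, c => by
      intro h1 _
      simp only [extT, Term.subst]
      exact h1 x (by simp [Term.count])
  | .app f ts, c => by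
      intro h1 h2
      simp only [count_app'] at h1
      simp only [extT] at h2
      have := extTList_agree mOf σ σ' ts c h1 (fun k hk => h2 k (by omega))
      simp only [extT, subst_app', List.map_append, this, List.map_map]
      congr 2
      apply List.map_congr_left
      intro k hk
      simp only [List.mem_range] at hk
      simp only [Function.comp, Term.subst]
      exact h2 _ (by omega)
theorem extTList_agree {F V : Type} [DecidableEq V] (mOf : F → ℕ) (σ σ' : WVar V → STerm F V) :
    ∀ (ws : List (Term F V)) (c : ℕ),
    (∀ x, 0 < seqCount x ws → σ (Sum.inl x) = σ' (Sum.inl x)) →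
    (∀ k < (extTList mOf ws c).2, σ (Sum.inr k) = σ' (Sum.inr k)) →
    (extTList mOf ws c).1.map (Term.subst σ) = (extTList mOf ws c).1.map (Term.subst σ')
  | [], c => by simp [extTList]
  | t :: ts, c => by
      intro h1 h2
      simp only [extTList] at h2
      have hm := extTList_mono mOf ts (extT mOf t c).2
      simp only [seqCount, List.map_cons, List.sum_cons] at h1
      have e1 := extT_agree mOf σ σ' t c (fun x hx => h1 x (by omega))
        (fun k hk => h2 k (by omega))
      have e2 := extTList_agree mOf σ σ' ts (extT mOf t c).2
        (fun x hx => h1 x (by simp only [seqCount] at hx; omega)) h2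
      simp only [extTList, List.map_cons, e1, e2]
end

theorem forall2_refl_star {F V : Type} (R : CTRS F V) (l : List (Term F V)) :
    List.Forall₂ (RedStar R) l l := by
  induction l with
  | nil => exact .nil
  | cons a l ih => exact .cons .refl ih

theorem red_inv {F V : Type} [DecidableEq V]
    (R : CTRS F V) (ar mOf : F → ℕ) (idx : CRule F V → ℕ)
    (hS : GoodSetup R ar mOf idx) (s : STerm F V) (f : F) (us : List (STerm F V))
    (h : Red (SRSys R ar mOf idx) s (.app (.orig f) us)) :
    ∃ ss, s = .app (.orig f) ss ∧ ss.length = us.length ∧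
      List.Forall₂ (RedStar (SRSys R ar mOf idx)) (ss.take (ar f)) (us.take (ar f)) := by
  obtain ⟨n, h⟩ := h
  cases n with
  | zero => exact h.elim
  | succ n =>
    simp only [LevelStep] at h
    generalize hu : Term.app (SSym.orig f) us = u at h
    cases h with
    | root h =>
      obtain ⟨r, hr, σ, rfl, rfl, -⟩ := h
      rcases hr with ⟨ρ, hρ, -, rfl⟩ | ⟨ρ, hρ, hc, j, hj, rfl⟩ | rfl | ⟨g, i, hi, rfl⟩
      · simp [uncondSRRule, guardT, subst_app'] at hu
      · obtain ⟨g, ws, hl⟩ := hS.2.1 ρ hρ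
        have hwf := (hS.1 ρ hρ).1
        rw [hl] at hwf
        have hlen : ws.length = ar g := by cases hwf; assumption
        have hlen' := extTList_length mOf ws 0
        rw [hlen] at hlen'
        unfold condSRRule at hu ⊢
        rw [hl] at hu ⊢
        simp only at hu ⊢
        by_cases hjk : j = ρ.conds.length
        · rw [if_pos hjk] at hu
          simp [guardT, subst_app'] at hu
        · rw [if_neg hjk] at hu
          simp only [subst_app', Term.app.injEq, SSym.orig.injEq] at hu
          obtain ⟨rfl, rfl⟩ := hu
          split_ifs
          · rw [subst_app']
            refine ⟨_, rfl, by simp, ?_⟩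
            rw [List.map_append, List.map_append,
              List.take_append_of_le_length (by simp [hlen']),
              List.take_append_of_le_length (by simp [hlen'])]
            exact forall2_refl_star _ _
          · rw [subst_app']
            refine ⟨_, rfl, by simp, ?_⟩
            rw [List.map_append, List.map_append,
              List.take_append_of_le_length (by simp [hlen']),
              List.take_append_of_le_length (by simp [hlen'])]
            exact forall2_refl_star _ _
      · simp [auxGuard, guardT, subst_app'] at hu
      · simp [auxShift, guardT, subst_app'] at hu
    | @congr g pre post a b hab =>
      simp only [Term.app.injEq] at hu
      obtain ⟨rfl, rfl⟩ := hu
      refine ⟨_, rfl, by simp, ?_⟩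
      apply List.forall₂_take
      refine List.rel_append (forall2_refl_star _ _) ?_
      refine .cons (.single ⟨n+1, ?_⟩) (forall2_refl_star _ _)
      exact hab

theorem forall2_trans_star {F V : Type} (R : CTRS F V) {a b c : List (Term F V)}
    (h1 : List.Forall₂ (RedStar R) a b) (h2 : List.Forall₂ (RedStar R) b c) :
    List.Forall₂ (RedStar R) a c := by
  induction h1 generalizing c with
  | nil => exact h2
  | cons h _ ih =>
    cases h2 with
    | cons h' h2 => exact .cons (Relation.ReflTransGen.trans h h') (ih h2)

theorem redStar_inv {F V : Type} [DecidableEq V]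
    (R : CTRS F V) (ar mOf : F → ℕ) (idx : CRule F V → ℕ)
    (hS : GoodSetup R ar mOf idx) (s : STerm F V) (f : F) (us : List (STerm F V))
    (h : RedStar (SRSys R ar mOf idx) s (.app (.orig f) us)) :
    ∃ ss, s = .app (.orig f) ss ∧ ss.length = us.length ∧
      List.Forall₂ (RedStar (SRSys R ar mOf idx)) (ss.take (ar f)) (us.take (ar f)) := by
  induction h using Relation.ReflTransGen.head_induction_on with
  | refl => exact ⟨us, rfl, rfl, forall2_refl_star _ _⟩
  | head h _ ih =>
    obtain ⟨ss, rfl, hl, hf⟩ := ih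
    obtain ⟨ss', rfl, hl', hf'⟩ := red_inv R ar mOf idx hS _ f ss h
    exact ⟨ss', rfl, hl'.trans hl, forall2_trans_star _ hf' hf⟩

mutual
theorem lift_aux {F V : Type} [DecidableEq V]
    (R : CTRS F V) (ar mOf : F → ℕ) (idx : CRule F V → ℕ)
    (hS : GoodSetup R ar mOf idx) (θ : WVar V → STerm F V) :
    ∀ (w : Term F V) (c : ℕ) (t : STerm F V) (σ₀ : WVar V → STerm F V),
    w.WF ar → (∀ x, w.count x ≤ 1) →
    RedStar (SRSys R ar mOf idx) t ((extT mOf w c).1.subst θ) →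
    ∃ σ : WVar V → STerm F V, t = (extT mOf w c).1.subst σ ∧
      (∀ x, 0 < w.count x →
        RedStar (SRSys R ar mOf idx) (σ (Sum.inl x)) (θ (Sum.inl x))) ∧
      (∀ x, w.count x = 0 → σ (Sum.inl x) = σ₀ (Sum.inl x)) ∧
      (∀ k < c, σ (Sum.inr k) = σ₀ (Sum.inr k))
  | .var y, c, t, σ₀ => by
      intro _ _ h
      simp only [extT, Term.subst] at h
      refine ⟨Function.update σ₀ (Sum.inl y) t, by simp [extT, Term.subst], ?_, ?_, ?_⟩
      · intro x hx
        by_cases hxy : y = x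
        · subst hxy; simpa using h
        · simp [Term.count, hxy] at hx
      · intro x hx
        by_cases hxy : y = x
        · simp [Term.count, hxy] at hx
        · rw [Function.update_of_ne]
          simpa using fun e => hxy e.symm
      · intro k _
        simp
  | .app f ws, c, t, σ₀ => by
      intro hwf hlin h
      simp only [count_app'] at hlin ⊢
      cases hwf with
      | app _ _ hlen hwf =>
      have hlen' := extTList_length mOf ws c
      simp only [extT, subst_app', List.map_append] at h
      obtain ⟨ss, rfl, hl, hf⟩ := redStar_inv R ar mOf idx hS _ f _ h
      rw [List.take_left' (by simp [hlen', hlen])] at hf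
      obtain ⟨σ, h1, h2, h3, h4⟩ := lift_auxList R ar mOf idx hS θ ws c _ σ₀ hwf hlin hf
      have hm := extTList_mono mOf ws c
      simp only [List.length_append, List.length_map, List.length_range, hlen', hlen] at hl
      let σ' : WVar V → STerm F V := fun v => match v with
        | Sum.inl x => σ (Sum.inl x)
        | Sum.inr k => if k < (extTList mOf ws c).2 then σ (Sum.inr k) else
            (ss.drop (ar f)).getD (k - (extTList mOf ws c).2) botT
      refine ⟨σ', ?_, h2, h3, ?_⟩
      · simp only [extT, subst_app', List.map_append, List.map_map]
        rw [extTList_agree mOf σ' σ ws c (fun _ _ => rfl) (fun k hk => if_pos hk), ← h1]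
        congr 1
        conv_lhs => rw [← List.take_append_drop (ar f) ss]
        congr 1
        apply List.ext_getElem
        · simp; omega
        · intro k hk1 hk2
          simp only [List.getElem_map, List.getElem_range, Function.comp, Term.subst, σ']
          rw [if_neg (by omega)]
          simp only [Nat.add_sub_cancel_left]
          rw [List.getD_eq_getElem _ _ hk1]
      · intro k hk
        rw [← h4 k hk]
        exact if_pos (by omega)
theorem lift_auxList {F V : Type} [DecidableEq V]
    (R : CTRS F V) (ar mOf : F → ℕ) (idx : CRule F V → ℕ)
    (hS : GoodSetup R ar mOf idx) (θ : WVar V → STerm F V) :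
    ∀ (ws : List (Term F V)) (c : ℕ) (ts : List (STerm F V)) (σ₀ : WVar V → STerm F V),
    (∀ w ∈ ws, w.WF ar) → (∀ x, seqCount x ws ≤ 1) →
    List.Forall₂ (RedStar (SRSys R ar mOf idx)) ts
      ((extTList mOf ws c).1.map (Term.subst θ)) →
    ∃ σ : WVar V → STerm F V, ts = (extTList mOf ws c).1.map (Term.subst σ) ∧
      (∀ x, 0 < seqCount x ws →
        RedStar (SRSys R ar mOf idx) (σ (Sum.inl x)) (θ (Sum.inl x))) ∧
      (∀ x, seqCount x ws = 0 → σ (Sum.inl x) = σ₀ (Sum.inl x)) ∧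
      (∀ k < c, σ (Sum.inr k) = σ₀ (Sum.inr k))
  | [], c, ts, σ₀ => by
      intro _ _ h
      simp only [extTList, List.map_nil, List.forall₂_nil_right_iff] at h
      subst h
      exact ⟨σ₀, by simp [extTList], by simp [seqCount], by simp, by simp⟩
  | w :: ws, c, ts, σ₀ => by
      intro hwf hlin h
      have hsc : ∀ x, seqCount x (w :: ws) = w.count x + seqCount x ws := by
        intro x; simp [seqCount]
      simp only [hsc] at hlin ⊢
      simp only [extTList, List.map_cons] at h
      cases h with
      | cons ha hb =>
      obtain ⟨σ₁, a1, a2, a3, a4⟩ := lift_aux R ar mOf idx hS θ w c _ σ₀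
        (hwf w (by simp)) (fun x => by have := hlin x; omega) ha
      obtain ⟨σ₂, b1, b2, b3, b4⟩ := lift_auxList R ar mOf idx hS θ ws _ _ σ₁
        (fun v hv => hwf v (by simp [hv])) (fun x => by have := hlin x; omega) hb
      have hm := extT_mono mOf w c
      refine ⟨σ₂, ?_, ?_, ?_, ?_⟩
      · simp only [extTList, List.map_cons]
        rw [← b1, a1]
        congr 1
        apply extT_agree
        · intro x hx
          exact (b3 x (by have := hlin x; omega)).symm
        · intro k hk
          exact (b4 k hk).symm
      · intro x hx
        by_cases h0 : seqCount x ws = 0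
        · rw [b3 x h0]; exact a2 x (by omega)
        · exact b2 x (by omega)
      · intro x hx
        rw [b3 x (by omega), a3 x (by omega)]
      · intro k hk
        rw [b4 k (by omega), a4 k hk]
end

/-- **Lemma (matching linear `ext`-patterns along `SR(R)`-reduction).**
Let `R` be a `U`-WLL DCTRS over `F`, `t` a reachable term in `T(F̄,V)`, `w` a
linear term in `T(F,V)`, `w' = ext(w)`, and `θ` a substitution over `F̄`.
If `t →*_{SR(R)} w'θ`, then there exists a substitution `σ` such that
`t = w'σ` and `xσ →*_{SR(R)} xθ` for all variables `x ∈ Var(w)`. -/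
theorem SR_pattern_lifting {F V : Type} [DecidableEq V]
    (R : CTRS F V) (ar mOf : F → ℕ) (idx : CRule F V → ℕ)
    (hS : GoodSetup R ar mOf idx) (hD : IsDCTRS R) (hU : IsUWLL R)
    (t : STerm F V) (ht : SRReachable R ar mOf idx t)
    (w : Term F V) (hwWF : w.WF ar) (hwlin : w.Linear)
    (θ : WVar V → STerm F V)
    (h : RedStar (SRSys R ar mOf idx) t ((extT mOf w 0).1.subst θ)) :
    ∃ σ : WVar V → STerm F V,
      t = (extT mOf w 0).1.subst σ ∧
      ∀ x : V, 0 < w.count x →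
        RedStar (SRSys R ar mOf idx) (σ (Sum.inl x)) (θ (Sum.inl x)) := by
  obtain ⟨σ, h1, h2, -, -⟩ := lift_aux R ar mOf idx hS θ w 0 t θ hwWF hwlin h
  exact ⟨σ, h1, h2⟩
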